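/- Let p, q ≥ 2 be coprime integers. The Laurent polynomial Θ_{p,q}(s₁, s₂, (s₁s₂)^{−1}) ∈ ℤ[t₁^{±1}, t₂^{±1}] (where t_i = s_i²) has degree exactly (p−1)(q−1) in t₁, i.e. the maximal exponent of t₁ occurring with nonzero coefficient is (p−1)(q−1). -/

import Mathlib

/-- `Δ_{p,q}(s) = ((s^{pq} − s^{−pq})(s − s^{−1})) / ((s^p − s^{−p})(s^q − s^{−q}))`,
the Alexander polynomial of the `(p,q)` torus knot evaluated at `t = s²`. -/
noncomputable def torusDelta {F : Type*} [Field F] (p q : ℕ) (s : F) : F :=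
  ((s ^ (p * q) - s⁻¹ ^ (p * q)) * (s - s⁻¹)) / ((s ^ p - s⁻¹ ^ p) * (s ^ q - s⁻¹ ^ q))

/-- `φ_{p,q}(s) = (s^p + s^{−p})/(s^p − s^{−p}) − q·(s^{pq} + s^{−pq})/(s^{pq} − s^{−pq})`. -/
noncomputable def torusPhi {F : Type*} [Field F] (p q : ℕ) (s : F) : F :=
  (s ^ p + s⁻¹ ^ p) / (s ^ p - s⁻¹ ^ p) -
    (q : F) * ((s ^ (p * q) + s⁻¹ ^ (p * q)) / (s ^ (p * q) - s⁻¹ ^ (p * q)))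

/-- `ψ_{p,q}(s) = Δ_{p,q}(s)·φ_{p,q}(s)`. -/
noncomputable def torusPsi {F : Type*} [Field F] (p q : ℕ) (s : F) : F :=
  torusDelta p q s * torusPhi p q s

/-- The 2-loop polynomial of the torus knot `T(p,q)`:
`Θ_{p,q}(s₁,s₂,s₃) = −(1/4)·Σ_{(i,j,k)} ψ_{p,q}(s_i)·ψ_{q,p}(s_j)·Δ_{p,q}(s_k)`,
the sum running over all six permutations `(i,j,k)` of `(1,2,3)`. -/
noncomputable def torusTheta {F : Type*} [Field F] (p q : ℕ) (s₁ s₂ s₃ : F) : F :=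
  -(1/4) * (torusPsi p q s₁ * torusPsi q p s₂ * torusDelta p q s₃
    + torusPsi p q s₁ * torusPsi q p s₃ * torusDelta p q s₂
    + torusPsi p q s₂ * torusPsi q p s₁ * torusDelta p q s₃
    + torusPsi p q s₂ * torusPsi q p s₃ * torusDelta p q s₁
    + torusPsi p q s₃ * torusPsi q p s₁ * torusDelta p q s₂
    + torusPsi p q s₃ * torusPsi q p s₂ * torusDelta p q s₁)

/-- The reduced 2-loop polynomial of the torus knot `T(p,q)`:
`Θ̂_{p,q}(s) = ψ_{p,q}(s)·ψ_{q,p}(s) / (2(s − s^{−1})²)`. -/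
noncomputable def torusThetaHat {F : Type*} [Field F] (p q : ℕ) (s : F) : F :=
  torusPsi p q s * torusPsi q p s / (2 * (s - s⁻¹) ^ 2)

/-- The `q`-integer `[n]_x = 1 + x + ⋯ + x^{n-1}`. -/
def qInt {A : Type*} [CommRing A] (n : ℕ) (x : A) : A :=
  ∑ i ∈ Finset.range n, x ^ i

/-- The sum `[0]_x + [1]_x + ⋯ + [n-1]_x` of the first `q`-integers. -/
def qIntSum {A : Type*} [CommRing A] (n : ℕ) (x : A) : A :=
  ∑ k ∈ Finset.range n, qInt k x

section CommRing

variable {A B : Type*} [CommRing A] [CommRing B]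

lemma map_qInt (f : A →+* B) (n : ℕ) (x : A) : f (qInt n x) = qInt n (f x) := by
  simp [qInt]

lemma map_qIntSum (f : A →+* B) (n : ℕ) (x : A) : f (qIntSum n x) = qIntSum n (f x) := by
  simp [qIntSum, map_qInt]

lemma qInt_succ (n : ℕ) (x : A) : qInt (n + 1) x = qInt n x + x ^ n :=
  Finset.sum_range_succ _ _

lemma qInt_succ' (n : ℕ) (x : A) : qInt (n + 1) x = x * qInt n x + 1 := by
  simp [qInt, Finset.sum_range_succ', Finset.mul_sum, pow_succ']

lemma qInt_mul_sub_one (n : ℕ) (x : A) : qInt n x * (x - 1) = x ^ n - 1 :=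
  geom_sum_mul x n

lemma qIntSum_succ (n : ℕ) (x : A) : qIntSum (n + 1) x = qIntSum n x + qInt n x :=
  Finset.sum_range_succ _ _

lemma qIntSum_mul_sub_one (n : ℕ) (x : A) : qIntSum n x * (x - 1) = qInt n x - n := by
  induction n with
  | zero => simp [qIntSum, qInt]
  | succ n ih =>
    rw [qIntSum_succ, qInt_succ]
    push_cast
    linear_combination ih + qInt_mul_sub_one n x

lemma qInt_mul (m n : ℕ) (x : A) : qInt (m * n) x = qInt m x * qInt n (x ^ m) := by
  induction n with
  | zero => simp [qInt]
  | succ n ih =>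
    rw [qInt_succ n, mul_add (qInt m x), ← ih, Nat.mul_succ, qInt, Finset.sum_range_add, qInt, qInt,
      Finset.sum_mul]
    simp [pow_add, pow_mul, mul_comm]

lemma isCoprime_qInt {m n : ℕ} (hn : 1 < n) (h : m.Coprime n) (x : A) :
    IsCoprime (qInt m x) (qInt n x) := by
  obtain ⟨a, -, ha⟩ := Nat.exists_mul_mod_eq_one_of_coprime h hn
  have e : m * a = n * (m * a / n) + 1 := by
    conv_lhs => rw [← Nat.div_add_mod (m * a) n, ha]
  have e' := congrArg (qInt · x) e
  simp only [qInt_succ', qInt_mul] at e'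
  exact ⟨qInt a (x ^ m), -x * qInt (m * a / n) (x ^ n), by linear_combination e'⟩

lemma pow_eq_one_of_qInt_eq_zero {n : ℕ} {x : A} (h : qInt n x = 0) : x ^ n = 1 := by
  rw [← sub_eq_zero, ← qInt_mul_sub_one, h, zero_mul]

lemma pow_mul_qInt_of_mul_eq_one {x y : A} (h : x * y = 1) (n : ℕ) :
    x ^ n * qInt (n + 1) y = qInt (n + 1) x := by
  induction n with
  | zero => simp [qInt]
  | succ n ih =>
    rw [qInt_succ', qInt_succ (n + 1) x]
    linear_combination ih + x ^ n * qInt (n + 1) y * h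

lemma qIntSum_add_pow_mul_qIntSum {x y : A} (h : x * y = 1) (n : ℕ) :
    qIntSum (n + 1) x + x ^ n * qIntSum (n + 1) y = n * qInt (n + 1) x := by
  induction n with
  | zero => simp [qInt, qIntSum]
  | succ n ih =>
    have h₁ := pow_mul_qInt_of_mul_eq_one h n
    have h₂ := qIntSum_mul_sub_one (n + 1) x
    rw [qIntSum_succ (n + 1), qIntSum_succ (n + 1) y, qInt_succ' (n + 1)]
    push_cast at h₂ ⊢
    linear_combination x * ih + x * h₁ - h₂

lemma qIntSum_mul_qInt_add {x y : A} (h : x * y = 1) {n : ℕ} (hn : 0 < n) :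
    qIntSum n x * qInt n y + qIntSum n y * qInt n x = (n - 1) * (qInt n x * qInt n y) := by
  obtain ⟨n, rfl⟩ := Nat.exists_eq_succ_of_ne_zero hn.ne'
  have h₁ := pow_mul_qInt_of_mul_eq_one h n
  have h₂ := qIntSum_add_pow_mul_qIntSum h n
  have h₃ : x ^ n * y ^ n = 1 := by rw [← mul_pow, h, one_pow]
  simp only [Nat.succ_eq_add_one]
  push_cast
  linear_combination (y ^ n * qInt (n + 1) x) * h₂ +
    (y ^ n * qIntSum (n + 1) x - n * y ^ n * qInt (n + 1) x) * h₁
    - (qIntSum (n + 1) x * qInt (n + 1) y + qIntSum (n + 1) y * qInt (n + 1) x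
      - n * (qInt (n + 1) x * qInt (n + 1) y)) * h₃

/-- The numerator of `-Θ_{p,q}(x, y, (xy)⁻¹)` over the common denominator
`[p]_x [p]_y [p]_{xy} [q]_x [q]_y [q]_{xy}`, up to a monomial factor. Here `dx`, `dy`, `du` stand for
the (polynomial) Alexander polynomial at `x`, `y`, `xy`, and `g` for the genus. -/
def thetaNumerator (p q g : ℕ) (x y dx dy du : A) : A :=
  -g * (qInt q x * qInt q y * qInt q (x * y) * qInt p x * qInt p y * qInt p (x * y) * dx * dy * du)
  + (q - 1) * (qIntSum p ((x * y) ^ q) *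
      (qInt q x * qInt q y * qInt q (x * y) * qInt p x * qInt p y * dx * dy))
  + (p - 1) * (qIntSum q ((x * y) ^ p) *
      (qInt q x * qInt q y * qInt p x * qInt p y * qInt p (x * y) * dx * dy))
  + qIntSum q (x ^ p) * qIntSum p (y ^ q) *
      (qInt q y * qInt q (x * y) * qInt p x * qInt p (x * y) * du)
  - qIntSum q (x ^ p) * qIntSum p ((x * y) ^ q) *
      (qInt q y * qInt q (x * y) * qInt p x * qInt p y * dy)
  + qIntSum q (y ^ p) * qIntSum p (x ^ q) *
      (qInt q x * qInt q (x * y) * qInt p y * qInt p (x * y) * du)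
  - qIntSum q (y ^ p) * qIntSum p ((x * y) ^ q) *
      (qInt q x * qInt q (x * y) * qInt p x * qInt p y * dx)
  - qIntSum q ((x * y) ^ p) * qIntSum p (x ^ q) *
      (qInt q x * qInt q y * qInt p y * qInt p (x * y) * dy)
  - qIntSum q ((x * y) ^ p) * qIntSum p (y ^ q) *
      (qInt q x * qInt q y * qInt p x * qInt p (x * y) * dx)

lemma map_thetaNumerator (f : A →+* B) (p q g : ℕ) (x y dx dy du : A) :
    f (thetaNumerator p q g x y dx dy du) =
      thetaNumerator p q g (f x) (f y) (f dx) (f dy) (f du) := by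
  simp [thetaNumerator, map_qInt, map_qIntSum]

lemma thetaNumerator_comm (p q g : ℕ) (x y dx dy du : A) :
    thetaNumerator p q g x y dx dy du = thetaNumerator q p g x y dx dy du := by
  unfold thetaNumerator
  ring

lemma qInt_dvd_sub (p q : ℕ) (x y : A) :
    qInt q x ∣ qIntSum p (y ^ q) * qInt p ((x * y) ^ q) -
      qIntSum p ((x * y) ^ q) * qInt p (y ^ q) := by
  rw [← Ideal.mem_span_singleton, ← Ideal.Quotient.eq_zero_iff_mem]
  set π := Ideal.Quotient.mk (Ideal.span {qInt q x})
  have h : (π x) ^ q = 1 := pow_eq_one_of_qInt_eq_zero <| by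
    rw [← map_qInt]
    exact Ideal.Quotient.eq_zero_iff_mem.2 (Ideal.mem_span_singleton_self _)
  simp [map_qInt, map_qIntSum, mul_pow, h]

lemma qInt_mul_dvd {p : ℕ} (hp : 0 < p) (q : ℕ) (x y : A) :
    qInt q (x * y) ∣ qIntSum p (x ^ q) * qInt p (y ^ q) + qIntSum p (y ^ q) * qInt p (x ^ q) -
      (p - 1) * (qInt p (x ^ q) * qInt p (y ^ q)) := by
  rw [← Ideal.mem_span_singleton, ← Ideal.Quotient.eq_zero_iff_mem]
  set π := Ideal.Quotient.mk (Ideal.span {qInt q (x * y)})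
  have h : (π x) ^ q * (π y) ^ q = 1 := by
    rw [← mul_pow, ← map_mul]
    refine pow_eq_one_of_qInt_eq_zero ?_
    rw [← map_qInt]
    exact Ideal.Quotient.eq_zero_iff_mem.2 (Ideal.mem_span_singleton_self _)
  simp [map_qInt, map_qIntSum, qIntSum_mul_qInt_add h hp]

lemma dvd_thetaNumerator {p q : ℕ} (hp : 0 < p) (g : ℕ) {x y dx dy du : A}
    (hx : dx * qInt p x = qInt p (x ^ q)) (hy : dy * qInt p y = qInt p (y ^ q))
    (hu : du * qInt p (x * y) = qInt p ((x * y) ^ q)) :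
    qInt q x * qInt q y * qInt q (x * y) ∣ thetaNumerator p q g x y dx dy du := by
  obtain ⟨c₁, h₁⟩ := qInt_dvd_sub p q x y
  obtain ⟨c₂, h₂⟩ := qInt_dvd_sub p q y x
  obtain ⟨c₃, h₃⟩ := qInt_mul_dvd hp q x y
  rw [mul_comm y x] at h₂
  rw [← hu, ← hy] at h₁
  rw [← hu, ← hx] at h₂
  rw [← hx, ← hy] at h₃
  refine ⟨-g * (qInt p x * qInt p y * qInt p (x * y) * dx * dy * du)
    + (q - 1) * (qIntSum p ((x * y) ^ q) * (qInt p x * qInt p y * dx * dy))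
    + qIntSum q (x ^ p) * qInt p x * c₁ + qIntSum q (y ^ p) * qInt p y * c₂
    - qIntSum q ((x * y) ^ p) * qInt p (x * y) * c₃, ?_⟩
  unfold thetaNumerator
  linear_combination qIntSum q (x ^ p) * qInt q y * qInt q (x * y) * qInt p x * h₁
    + qIntSum q (y ^ p) * qInt q x * qInt q (x * y) * qInt p y * h₂
    - qIntSum q ((x * y) ^ p) * qInt q x * qInt q y * qInt p (x * y) * h₃

end CommRing

section Polynomial

open Polynomial

variable {R : Type*} [CommRing R]

lemma coeff_zero_qInt_X_mul (n : ℕ) (hn : 0 < n) (z : R[X]) :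
    (qInt n (X * z)).coeff 0 = 1 := by
  obtain ⟨n, rfl⟩ := Nat.exists_eq_succ_of_ne_zero hn.ne'
  simp [qInt_succ', mul_assoc]

lemma qInt_C (n : ℕ) (a : R) : qInt n (C a) = C (qInt n a) :=
  (map_qInt C n a).symm

variable [IsDomain R]

lemma qInt_ne_zero {z : R[X]} (hz : 0 < z.degree) {n : ℕ} (hn : 0 < n) : qInt n z ≠ 0 := by
  intro h
  have h₁ := pow_eq_one_of_qInt_eq_zero h
  have h₂ := congrArg degree h₁
  rw [degree_pow, degree_one] at h₂
  exact (nsmul_pos hz hn.ne').ne' h₂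

lemma natDegree_qInt {z : R[X]} (hz : 0 < z.natDegree) {n : ℕ} (hn : 0 < n) :
    (qInt n z).natDegree = (n - 1) * z.natDegree := by
  have hz' := natDegree_pos_iff_degree_pos.1 hz
  have h := congrArg natDegree (qInt_mul_sub_one n z)
  have h₁ : (z - 1).natDegree = z.natDegree := natDegree_sub_C (a := 1)
  have h₂ : (z ^ n - 1).natDegree = n * z.natDegree := by
    rw [← natDegree_pow]
    exact natDegree_sub_C (a := 1)
  have h₃ : z - 1 ≠ 0 := by
    intro h₃
    simp [h₃] at h₁
    omega
  rw [natDegree_mul (qInt_ne_zero hz' hn) h₃, h₁, h₂] at h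
  obtain ⟨n, rfl⟩ := Nat.exists_eq_succ_of_ne_zero hn.ne'
  simp only [Nat.succ_eq_add_one, Nat.add_sub_cancel]
  linarith

lemma degree_qIntSum_lt {z : R[X]} (hz : 0 < z.degree) {n : ℕ} (hn : 0 < n) :
    (qIntSum n z).degree < (qInt n z).degree := by
  have hG := qInt_ne_zero hz hn
  by_cases h0 : qIntSum n z = 0
  · rwa [h0, degree_zero, bot_lt_iff_ne_bot, Ne, degree_eq_bot]
  have h := congrArg degree (qIntSum_mul_sub_one n z)
  have h₁ : (z - 1).degree = z.degree := by
    refine degree_sub_eq_left_of_degree_lt ?_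
    rwa [degree_one]
  have h₂ : (qInt n z - (n : R[X])).degree ≤ (qInt n z).degree := by
    refine (degree_sub_le _ _).trans (max_le le_rfl ?_)
    exact (degree_natCast_le n).trans (zero_le_degree_iff.2 hG)
  rw [degree_mul, h₁] at h
  refine lt_of_lt_of_le ?_ (h.trans_le h₂)
  rw [degree_eq_natDegree h0, degree_eq_natDegree (ne_zero_of_degree_gt hz)] at *
  norm_cast at *
  omega

lemma isRelPrime_C_left {f : R} (hf : f ≠ 0) {h : R[X]} {k : ℕ} (hk : IsUnit (h.coeff k)) :
    IsRelPrime (C f) h := by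
  intro d hd hd'
  obtain ⟨a, rfl⟩ : ∃ a, d = C a := by
    refine ⟨d.coeff 0, eq_C_of_natDegree_eq_zero ?_⟩
    have := natDegree_le_of_dvd hd (C_ne_zero.2 hf)
    rw [natDegree_C] at this
    omega
  exact isUnit_C.2 (isUnit_of_dvd_unit ((C_dvd_iff_dvd_coeff _ _).1 hd' k) hk)

lemma IsRelPrime.of_mulEquiv {M N : Type*} [CommMonoid M] [CommMonoid N] (e : M ≃* N) {a b : M}
    (h : IsRelPrime (e a) (e b)) : IsRelPrime a b := fun _ ha hb =>
  (MulEquiv.isUnit_map e).1 (h (map_dvd e ha) (map_dvd e hb))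

lemma isRelPrime_qInt_C_X {m n : ℕ} (hm : 0 < m) (hn : 0 < n) :
    IsRelPrime (qInt m (C X : R[X][X])) (qInt n X) := by
  rw [qInt_C]
  refine isRelPrime_C_left (k := 0) (qInt_ne_zero (by simp) hm) ?_
  simpa using congrArg IsUnit (coeff_zero_qInt_X_mul n hn (1 : R[X][X]))

lemma isRelPrime_qInt_C_mul {m n : ℕ} (hm : 0 < m) (hn : 0 < n) :
    IsRelPrime (qInt m (C X : R[X][X])) (qInt n (X * C X)) := by
  rw [qInt_C]
  refine isRelPrime_C_left (k := 0) (qInt_ne_zero (by simp) hm) ?_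
  rw [coeff_zero_qInt_X_mul n hn]
  exact isUnit_one

lemma isRelPrime_qInt_X_mul {m n : ℕ} (hm : 0 < m) (hn : 0 < n) :
    IsRelPrime (qInt m (X : R[X][X])) (qInt n (X * C X)) := by
  let e : R[X][X] ≃+* R[X][X] := Bivariate.swap (R := R)
  refine IsRelPrime.of_mulEquiv (e : R[X][X] ≃* R[X][X]) ?_
  have h₁ : e X = C X := Bivariate.swap_Y
  have h₂ : e (C X) = X := Bivariate.swap_X
  have h₃ : ∀ n z, e (qInt n z) = qInt n (e z) := map_qInt (e : R[X][X] →+* R[X][X])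
  change IsRelPrime (e _) (e _)
  rw [h₃, h₃, map_mul, h₁, h₂, mul_comm]
  exact isRelPrime_qInt_C_mul hm hn

lemma isRelPrime_qInt_prod [UniqueFactorizationMonoid R] {p q : ℕ} (hp : 1 < p) (hq : 1 < q)
    (hpq : p.Coprime q) :
    IsRelPrime (qInt p (X : R[X][X]) * qInt p (C X : R[X][X]) * qInt p (X * C X : R[X][X]))
      (qInt q (X : R[X][X]) * qInt q (C X : R[X][X]) * qInt q (X * C X : R[X][X])) := by
  have hp' : 0 < p := by omega
  have hq' : 0 < q := by omega
  have h := fun x : R[X][X] => (isCoprime_qInt hq hpq x).isRelPrime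
  refine IsRelPrime.mul_left (.mul_left ?_ ?_) ?_ <;> refine IsRelPrime.mul_right (.mul_right ?_ ?_) ?_
  · exact h _
  · exact (isRelPrime_qInt_C_X hq' hp').symm
  · exact isRelPrime_qInt_X_mul hp' hq'
  · exact isRelPrime_qInt_C_X hp' hq'
  · exact h _
  · exact isRelPrime_qInt_C_mul hp' hq'
  · exact (isRelPrime_qInt_X_mul hq' hp').symm
  · exact (isRelPrime_qInt_C_mul hq' hp').symm
  · exact h _

lemma exists_mul_qInt_eq {p q : ℕ} (hq : 1 < q) (hpq : p.Coprime q) :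
    ∃ D : R[X], D * qInt q X = qInt q (X ^ p) ∧ D * qInt p X = qInt p (X ^ q) := by
  have h : qInt p X * qInt q (X ^ p) = qInt q X * qInt p (X ^ q : R[X]) := by
    rw [← qInt_mul, ← qInt_mul, mul_comm]
  obtain ⟨D, hD⟩ := (isCoprime_qInt hq hpq (X : R[X])).symm.dvd_of_dvd_mul_left ⟨_, h⟩
  refine ⟨D, by rw [hD, mul_comm], ?_⟩
  refine mul_left_cancel₀ (qInt_ne_zero (z := (X : R[X])) (by simp) (by omega : 0 < q)) ?_
  rw [← h, hD]
  ring

lemma degree_mul_lt_of_lt_of_le {a a' b b' : R[X]} (ha : a.degree < a'.degree)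
    (hb : b.degree ≤ b'.degree) (hb' : b' ≠ 0) : (a * b).degree < (a' * b').degree := by
  rw [degree_mul, degree_mul]
  by_cases h : b = 0
  · rw [h, degree_zero, WithBot.add_bot, bot_lt_iff_ne_bot, ← degree_mul, Ne, degree_eq_bot]
    exact mul_ne_zero (ne_zero_of_degree_gt ha) hb'
  rw [degree_eq_natDegree h, degree_eq_natDegree hb', degree_eq_natDegree (ne_zero_of_degree_gt ha)]
    at *
  by_cases h' : a = 0
  · simp [h']
  rw [degree_eq_natDegree h'] at *
  norm_cast at *
  omega

lemma degree_thetaNumerator_add_lt {p q : ℕ} (hp : 0 < p) (hq : 0 < q) (g : ℕ) {z : R}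
    {dx dy du x y : R[X]} (hx : 0 < x.degree) (hxy : 0 < (x * y).degree)
    (hy : y = C z) (hyp : qInt p y ≠ 0) (hyq : qInt q y ≠ 0)
    (hdy : dy ≠ 0)
    (hxq : dx * qInt q x = qInt q (x ^ p)) (hxp : dx * qInt p x = qInt p (x ^ q))
    (huq : du * qInt q (x * y) = qInt q ((x * y) ^ p))
    (hup : du * qInt p (x * y) = qInt p ((x * y) ^ q)) :
    (thetaNumerator p q g x y dx dy du +
      g * (dx * dy * du * (qInt p x * qInt p y * qInt p (x * y) *
        (qInt q x * qInt q y * qInt q (x * y))))).degree <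
      (dx * dy * du * (qInt p x * qInt p y * qInt p (x * y) *
        (qInt q x * qInt q y * qInt q (x * y)))).degree := by
  have hpow : ∀ {t : R[X]} {n : ℕ}, 0 < t.degree → 0 < n → 0 < (t ^ n).degree := by
    intro t n ht hn
    rw [degree_pow]
    exact nsmul_pos ht hn.ne'
  have hqx := qInt_ne_zero hx hq
  have hpx := qInt_ne_zero hx hp
  have hqu := qInt_ne_zero hxy hq
  have hpu := qInt_ne_zero hxy hp
  have hdx : dx ≠ 0 := left_ne_zero_of_mul (hxq.trans_ne (qInt_ne_zero (hpow hx hp) hq))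
  have hdu : du ≠ 0 := left_ne_zero_of_mul (huq.trans_ne (qInt_ne_zero (hpow hxy hp) hq))
  have hax := degree_qIntSum_lt (hpow hx hp) hq
  have hbx := degree_qIntSum_lt (hpow hx hq) hp
  have hau := degree_qIntSum_lt (hpow hxy hp) hq
  have hbu := degree_qIntSum_lt (hpow hxy hq) hp
  rw [← hxq] at hax
  rw [← hxp] at hbx
  rw [← huq] at hau
  rw [← hup] at hbu
  have hS : ∀ m n : ℕ, (qIntSum m (y ^ n)).degree ≤ 0 := by
    intro m n
    rw [hy, ← C_pow, ← map_qIntSum]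
    exact degree_C_le
  have hay := (hS q p).trans (zero_le_degree_iff.2 (mul_ne_zero hdy hyq))
  have hby := (hS p q).trans (zero_le_degree_iff.2 (mul_ne_zero hdy hyp))
  have hcast : ∀ n : ℕ, ((n : R[X]) - 1).degree ≤ 0 := fun n =>
    (degree_sub_le _ _).trans (max_le (degree_natCast_le n) degree_one_le)
  set G := dx * dy * du * (qInt p x * qInt p y * qInt p (x * y) *
        (qInt q x * qInt q y * qInt q (x * y))) with hG
  have key : ∀ a a' b b' c : R[X], a.degree < a'.degree → b.degree ≤ b'.degree → b' ≠ 0 →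
      c ≠ 0 → G = a' * b' * c → (a * b * c).degree < G.degree := by
    intro a a' b b' c ha hb hb' hc h
    rw [h]
    exact degree_mul_lt_of_lt_of_le (degree_mul_lt_of_lt_of_le ha hb hb') le_rfl hc
  have hadd : ∀ {a b : R[X]}, a.degree < G.degree → b.degree < G.degree →
      (a + b).degree < G.degree := fun ha hb => (degree_add_le _ _).trans_lt (max_lt ha hb)
  have hsub : ∀ {a b : R[X]}, a.degree < G.degree → b.degree < G.degree →
      (a - b).degree < G.degree := fun ha hb => (degree_sub_le _ _).trans_lt (max_lt ha hb)
  clear hy hxq hxp huq hup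
  have h₁ := key _ _ ((q : R[X]) - 1) 1 (qInt q x * qInt q y * qInt q (x * y) * qInt p x *
    qInt p y * dx * dy) hbu (by simpa using hcast q) one_ne_zero (by simp [*]) (by rw [hG]; ring)
  have h₂ := key _ _ ((p : R[X]) - 1) 1 (qInt q x * qInt q y * qInt p x * qInt p y *
    qInt p (x * y) * dx * dy) hau (by simpa using hcast p) one_ne_zero (by simp [*])
    (by rw [hG]; ring)
  have h₃ := key _ _ _ _ (qInt q y * qInt q (x * y) * qInt p x * qInt p (x * y) * du)
    hax hby (by simp [*]) (by simp [*]) (by rw [hG]; ring)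
  have h₄ := key _ _ _ _ (qInt q y * qInt q (x * y) * qInt p x * qInt p y * dy)
    hax hbu.le (by simp [*]) (by simp [*]) (by rw [hG]; ring)
  have h₅ := key _ _ _ _ (qInt q x * qInt q (x * y) * qInt p y * qInt p (x * y) * du)
    hbx hay (by simp [*]) (by simp [*]) (by rw [hG]; ring)
  have h₆ := key _ _ _ _ (qInt q x * qInt q (x * y) * qInt p x * qInt p y * dx)
    hbu hay (by simp [*]) (by simp [*]) (by rw [hG]; ring)
  have h₇ := key _ _ _ _ (qInt q x * qInt q y * qInt p y * qInt p (x * y) * dy)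
    hau hbx.le (by simp [*]) (by simp [*]) (by rw [hG]; ring)
  have h₈ := key _ _ _ _ (qInt q x * qInt q y * qInt p x * qInt p (x * y) * dx)
    hau hby (by simp [*]) (by simp [*]) (by rw [hG]; ring)
  convert hsub (hsub (hsub (hadd (hsub (hadd (hadd h₁ h₂) h₃) h₄) h₅) h₆) h₇) h₈ using 2
  rw [hG]
  unfold thetaNumerator
  ring

theorem exists_mul_eq_thetaNumerator [UniqueFactorizationMonoid R] [CharZero R] {p q g : ℕ}
    (hp : 1 < p) (hq : 1 < q) (hg : 0 < g) (hpq : p.Coprime q) :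
    ∃ (D : R[X]) (W : R[X][X]), D * qInt q X = qInt q (X ^ p) ∧ D * qInt p X = qInt p (X ^ q) ∧
      W * (qInt p (X : R[X][X]) * qInt p (C X : R[X][X]) * qInt p (X * C X : R[X][X]) *
        (qInt q (X : R[X][X]) * qInt q (C X : R[X][X]) * qInt q (X * C X : R[X][X]))) =
        thetaNumerator p q g (X : R[X][X]) (C X) (aeval X D) (aeval (C X) D) (aeval (X * C X) D) ∧
      W.natDegree = 2 * ((p - 1) * (q - 1)) := by
  obtain ⟨D, hDq, hDp⟩ := exists_mul_qInt_eq (R := R) hq hpq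
  have hp' : 0 < p := by omega
  have hq' : 0 < q := by omega
  have hmap : ∀ (z : R[X][X]) (n : ℕ) (w : R[X]),
      aeval z (qInt n w) = qInt n (aeval z w) := fun z =>
    map_qInt ((aeval z : R[X] →ₐ[R] R[X][X]) : R[X] →+* R[X][X])
  have hq_eq : ∀ z : R[X][X], aeval z D * qInt q z = qInt q (z ^ p) := by
    intro z
    simpa only [map_mul, hmap, map_pow, aeval_X] using congrArg (aeval z) hDq
  have hp_eq : ∀ z : R[X][X], aeval z D * qInt p z = qInt p (z ^ q) := by
    intro z
    simpa only [map_mul, hmap, map_pow, aeval_X] using congrArg (aeval z) hDp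
  have hdvd₁ := dvd_thetaNumerator hq' g (hq_eq X) (hq_eq (C X)) (hq_eq (X * C X))
  rw [thetaNumerator_comm] at hdvd₁
  have hdvd₂ := dvd_thetaNumerator hp' g (hp_eq X) (hp_eq (C X)) (hp_eq (X * C X))
  have hdvd := (isRelPrime_qInt_prod (R := R) hp hq hpq).mul_dvd hdvd₁ hdvd₂
  obtain ⟨W, hW⟩ := hdvd
  rw [mul_comm _ W] at hW
  refine ⟨D, W, hDq, hDp, hW.symm, ?_⟩
  have hu : (X * C X : R[X][X]).natDegree = 1 := by
    rw [natDegree_mul_C X_ne_zero, natDegree_X]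
  have hx1 : (X : R[X][X]).natDegree = 1 := natDegree_X
  have hnat : ∀ z : R[X][X], z.natDegree = 1 →
      aeval z D ≠ 0 ∧ (aeval z D).natDegree = (p - 1) * (q - 1) := by
    intro z hz
    have hzp : 0 < (z ^ p).natDegree := by rw [natDegree_pow, hz]; omega
    have h₀ := qInt_ne_zero (natDegree_pos_iff_degree_pos.1 hzp) hq'
    rw [← hq_eq] at h₀
    have h₁ := congrArg natDegree (hq_eq z)
    rw [natDegree_mul (left_ne_zero_of_mul h₀) (right_ne_zero_of_mul h₀),
      natDegree_qInt (by omega) hq', natDegree_qInt hzp hq', natDegree_pow, hz] at h₁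
    refine ⟨left_ne_zero_of_mul h₀, ?_⟩
    obtain ⟨p, rfl⟩ := Nat.exists_eq_add_of_lt hp'
    simp only [zero_add, Nat.add_sub_cancel] at *
    linarith
  obtain ⟨hdx, hdx'⟩ := hnat X hx1
  obtain ⟨hdu, hdu'⟩ := hnat (X * C X) hu
  have hyp : qInt p (C X : R[X][X]) ≠ 0 := by
    rw [qInt_C]
    exact C_ne_zero.2 (qInt_ne_zero (by simp) hp')
  have hyq : qInt q (C X : R[X][X]) ≠ 0 := by
    rw [qInt_C]
    exact C_ne_zero.2 (qInt_ne_zero (by simp) hq')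
  have hdyC : aeval (C X : R[X][X]) D = C D := by
    have := aeval_algebraMap_apply R[X][X] (X : R[X]) D
    rw [algebraMap_eq] at this
    simpa using this
  have hdy : aeval (C X : R[X][X]) D ≠ 0 := by
    rw [hdyC, C_ne_zero]
    rintro rfl
    simp at hdx
  have hlt := degree_thetaNumerator_add_lt hp' hq' g (z := X) (x := X) (y := C X)
    (natDegree_pos_iff_degree_pos.1 (by omega)) (natDegree_pos_iff_degree_pos.1 (by omega)) rfl
    hyp hyq hdy (hq_eq _) (hp_eq _) (hq_eq _) (hp_eq _)
  have hx0 := natDegree_pos_iff_degree_pos.1 (hx1.symm ▸ one_pos)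
  have hu0 := natDegree_pos_iff_degree_pos.1 (hu.symm ▸ one_pos)
  have hQ : qInt p (X : R[X][X]) * qInt p (C X : R[X][X]) * qInt p (X * C X : R[X][X]) *
        (qInt q (X : R[X][X]) * qInt q (C X : R[X][X]) * qInt q (X * C X : R[X][X])) ≠ 0 := by
    exact mul_ne_zero (mul_ne_zero (mul_ne_zero (qInt_ne_zero hx0 hp') hyp) (qInt_ne_zero hu0 hp'))
      (mul_ne_zero (mul_ne_zero (qInt_ne_zero hx0 hq') hyq) (qInt_ne_zero hu0 hq'))
  rw [hW, ← mul_assoc (g : R[X][X]), ← add_mul] at hlt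
  set G := aeval (X : R[X][X]) D * aeval (C X : R[X][X]) D * aeval (X * C X : R[X][X]) D
  rw [degree_mul (p := W + (g : R[X][X]) * G), degree_mul (p := G)] at hlt
  have hlt' : (W + (g : R[X][X]) * G).degree < G.degree := lt_of_add_lt_add_right hlt
  have hgd : (-((g : R[X][X]) * G)).degree = G.degree := by
    rw [degree_neg, degree_mul, ← C_eq_natCast, degree_C (by exact_mod_cast hg.ne'), zero_add]
  have hWd := degree_add_eq_right_of_degree_lt (hlt'.trans_eq hgd.symm)
  rw [add_neg_cancel_right, hgd] at hWd
  rw [natDegree_eq_of_degree_eq hWd, natDegree_mul (mul_ne_zero hdx hdy) hdu,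
    natDegree_mul hdx hdy, hdx', hdu', hdyC, natDegree_C]
  ring

end Polynomial

section Field

variable {F : Type*} [Field F]

lemma pow_sub_inv_pow {s : F} (hs : s ≠ 0) (n : ℕ) :
    s ^ n - s⁻¹ ^ n = s⁻¹ ^ n * ((s ^ 2) ^ n - 1) := by
  have : s⁻¹ ^ n * s ^ n = 1 := by rw [← mul_pow, inv_mul_cancel₀ hs, one_pow]
  linear_combination (-s ^ n) * this

lemma pow_add_inv_pow {s : F} (hs : s ≠ 0) (n : ℕ) :
    s ^ n + s⁻¹ ^ n = s⁻¹ ^ n * ((s ^ 2) ^ n + 1) := by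
  have : s⁻¹ ^ n * s ^ n = 1 := by rw [← mul_pow, inv_mul_cancel₀ hs, one_pow]
  linear_combination (-s ^ n) * this

lemma torusDelta_eq {p q : ℕ} (hp : 0 < p) (hq : 0 < q) {s D : F} (hs : s ≠ 0)
    (hs' : ∀ n, 0 < n → (s ^ 2) ^ n ≠ 1)
    (hD : D * qInt q (s ^ 2) = qInt q ((s ^ 2) ^ p)) :
    torusDelta p q s = s⁻¹ ^ ((p - 1) * (q - 1)) * D := by
  have h₁ := fun n hn => sub_ne_zero.2 (hs' n hn)
  have h₂ := pow_sub_inv_pow hs 1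
  rw [pow_one, pow_one, pow_one] at h₂
  have h₃ : s⁻¹ ^ (p * q) * s⁻¹ = s⁻¹ ^ ((p - 1) * (q - 1)) * (s⁻¹ ^ p * s⁻¹ ^ q) := by
    rw [← pow_succ, ← pow_add, ← pow_add]
    congr 1
    obtain ⟨p, rfl⟩ := Nat.exists_eq_succ_of_ne_zero hp.ne'
    obtain ⟨q, rfl⟩ := Nat.exists_eq_succ_of_ne_zero hq.ne'
    simp only [Nat.succ_eq_add_one, Nat.add_sub_cancel]
    ring
  have h₄ := qInt_mul_sub_one q (s ^ 2)
  have h₅ := qInt_mul_sub_one q ((s ^ 2) ^ p)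
  rw [← hD, ← pow_mul (s ^ 2) p q] at h₅
  rw [torusDelta, pow_sub_inv_pow hs, pow_sub_inv_pow hs, pow_sub_inv_pow hs, h₂, div_eq_iff]
  · rw [← h₅, ← h₄]
    linear_combination
      (D * qInt q (s ^ 2) * ((s ^ 2) ^ p - 1) * (s ^ 2 - 1)) * h₃
  · have := inv_ne_zero hs
    simp only [ne_eq, mul_eq_zero, pow_eq_zero_iff', this, false_and, h₁ p hp, h₁ q hq,
      not_false_eq_true, or_self]

lemma torusPhi_eq {p q : ℕ} (hp : 0 < p) (hq : 0 < q) {s : F} (hs : s ≠ 0)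
    (hs' : ∀ n, 0 < n → (s ^ 2) ^ n ≠ 1) :
    torusPhi p q s = (1 - q) + 2 * (qIntSum q ((s ^ 2) ^ p) / qInt q ((s ^ 2) ^ p)) := by
  have h₀ : ∀ n, s⁻¹ ^ n ≠ 0 := fun n => pow_ne_zero n (inv_ne_zero hs)
  have h₁ := sub_ne_zero.2 (hs' p hp)
  have h₂ := sub_ne_zero.2 (hs' (p * q) (Nat.mul_pos hp hq))
  rw [torusPhi, pow_sub_inv_pow hs, pow_sub_inv_pow hs, pow_add_inv_pow hs, pow_add_inv_pow hs,
    mul_div_mul_left _ _ (h₀ _), mul_div_mul_left _ _ (h₀ _)]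
  rw [pow_mul] at h₂ ⊢
  set x := (s ^ 2) ^ p
  have h₃ := qInt_mul_sub_one q x
  have h₄ := qIntSum_mul_sub_one q x
  rw [← h₃] at h₂
  have h₅ := left_ne_zero_of_mul h₂
  rw [show x ^ q = qInt q x * (x - 1) + 1 by linear_combination -h₃, add_sub_cancel_right]
  field_simp
  linear_combination (-2) * h₄

lemma torusDelta_inv (p q : ℕ) (s : F) : torusDelta p q s⁻¹ = torusDelta p q s := by
  rw [torusDelta, torusDelta, inv_inv]
  congr 1 <;> ring

lemma torusPhi_inv (p q : ℕ) (s : F) : torusPhi p q s⁻¹ = -torusPhi p q s := by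
  rw [torusPhi, torusPhi, inv_inv, ← neg_sub (s ^ p), ← neg_sub (s ^ (p * q)), div_neg, div_neg]
  ring

lemma torusDelta_comm (p q : ℕ) (s : F) : torusDelta p q s = torusDelta q p s := by
  rw [torusDelta, torusDelta, mul_comm p q, mul_comm (s ^ p - _)]

lemma torusTheta_eq [CharZero F] {p q g : ℕ} (hp : 0 < p) (hq : 0 < q)
    (hg : 2 * g = (p - 1) * (q - 1)) {s₁ s₂ dx dy du w : F} (h₁ : s₁ ≠ 0) (h₂ : s₂ ≠ 0)
    (h₁' : ∀ n, 0 < n → (s₁ ^ 2) ^ n ≠ 1) (h₂' : ∀ n, 0 < n → (s₂ ^ 2) ^ n ≠ 1)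
    (h₃' : ∀ n, 0 < n → ((s₁ * s₂) ^ 2) ^ n ≠ 1)
    (hxq : dx * qInt q (s₁ ^ 2) = qInt q ((s₁ ^ 2) ^ p))
    (hxp : dx * qInt p (s₁ ^ 2) = qInt p ((s₁ ^ 2) ^ q))
    (hyq : dy * qInt q (s₂ ^ 2) = qInt q ((s₂ ^ 2) ^ p))
    (hyp : dy * qInt p (s₂ ^ 2) = qInt p ((s₂ ^ 2) ^ q))
    (huq : du * qInt q (s₁ ^ 2 * s₂ ^ 2) = qInt q ((s₁ ^ 2 * s₂ ^ 2) ^ p))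
    (hup : du * qInt p (s₁ ^ 2 * s₂ ^ 2) = qInt p ((s₁ ^ 2 * s₂ ^ 2) ^ q))
    (hw : w * (qInt p (s₁ ^ 2) * qInt p (s₂ ^ 2) * qInt p (s₁ ^ 2 * s₂ ^ 2) *
      (qInt q (s₁ ^ 2) * qInt q (s₂ ^ 2) * qInt q (s₁ ^ 2 * s₂ ^ 2))) =
      thetaNumerator p q g (s₁ ^ 2) (s₂ ^ 2) dx dy du) :
    torusTheta p q s₁ s₂ (s₁ * s₂)⁻¹ = -(((s₁ * s₂) ^ 2)⁻¹ ^ ((p - 1) * (q - 1)) * w) := by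
  have h₃ := mul_ne_zero h₁ h₂
  have hne : ∀ {z : F} {n : ℕ}, 0 < n → (∀ n, 0 < n → z ^ n ≠ 1) → qInt n z ≠ 0 :=
    fun hn hz h => hz _ hn (pow_eq_one_of_qInt_eq_zero h)
  have hpow : ∀ {z : F} {m : ℕ}, 0 < m → (∀ n, 0 < n → z ^ n ≠ 1) →
      ∀ n, 0 < n → (z ^ m) ^ n ≠ 1 := fun hm hz n hn => by
    rw [← pow_mul]
    exact hz _ (Nat.mul_pos hm hn)
  have hcast : (2 * g : F) = (p - 1) * (q - 1) := by
    have := congrArg (Nat.cast : ℕ → F) hg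
    rwa [Nat.cast_mul, Nat.cast_mul, Nat.cast_sub hp, Nat.cast_sub hq, Nat.cast_one,
      Nat.cast_two] at this
  simp only [torusTheta, torusPsi, torusDelta_comm q p, torusDelta_inv, torusPhi_inv]
  rw [← mul_pow] at huq hup hw
  rw [torusDelta_eq hp hq h₁ h₁' hxq, torusDelta_eq hp hq h₂ h₂' hyq,
    torusDelta_eq hp hq h₃ h₃' huq, torusPhi_eq hp hq h₁ h₁', torusPhi_eq hp hq h₂ h₂',
    torusPhi_eq hp hq h₃ h₃', torusPhi_eq hq hp h₁ h₁', torusPhi_eq hq hp h₂ h₂',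
    torusPhi_eq hq hp h₃ h₃']
  have hax := div_mul_cancel₀ (qIntSum q ((s₁ ^ 2) ^ p)) (hne hq (hpow hp h₁'))
  have hay := div_mul_cancel₀ (qIntSum q ((s₂ ^ 2) ^ p)) (hne hq (hpow hp h₂'))
  have hau := div_mul_cancel₀ (qIntSum q (((s₁ * s₂) ^ 2) ^ p)) (hne hq (hpow hp h₃'))
  have hbx := div_mul_cancel₀ (qIntSum p ((s₁ ^ 2) ^ q)) (hne hp (hpow hq h₁'))
  have hby := div_mul_cancel₀ (qIntSum p ((s₂ ^ 2) ^ q)) (hne hp (hpow hq h₂'))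
  have hbu := div_mul_cancel₀ (qIntSum p (((s₁ * s₂) ^ 2) ^ q)) (hne hp (hpow hq h₃'))
  set ax := qIntSum q ((s₁ ^ 2) ^ p) / qInt q ((s₁ ^ 2) ^ p)
  set ay := qIntSum q ((s₂ ^ 2) ^ p) / qInt q ((s₂ ^ 2) ^ p)
  set au := qIntSum q (((s₁ * s₂) ^ 2) ^ p) / qInt q (((s₁ * s₂) ^ 2) ^ p)
  set bx := qIntSum p ((s₁ ^ 2) ^ q) / qInt p ((s₁ ^ 2) ^ q)
  set bY := qIntSum p ((s₂ ^ 2) ^ q) / qInt p ((s₂ ^ 2) ^ q)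
  set bu := qIntSum p (((s₁ * s₂) ^ 2) ^ q) / qInt p (((s₁ * s₂) ^ 2) ^ q)
  have hw' : w = dx * dy * du * (-g + (q - 1) * bu + (p - 1) * au + ax * (bY - bu)
      + ay * (bx - bu) - au * (bx + bY)) := by
    refine mul_right_cancel₀ (mul_ne_zero (mul_ne_zero (mul_ne_zero (hne hp h₁') (hne hp h₂'))
      (hne hp h₃')) (mul_ne_zero (mul_ne_zero (hne hq h₁') (hne hq h₂')) (hne hq h₃'))) ?_
    rw [hw]
    simp only [thetaNumerator, ← mul_pow]
    rw [← hax, ← hay, ← hau, ← hbx, ← hby, ← hbu, ← hxq, ← hxp, ← hyq, ← hyp, ← huq, ← hup]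
    ring
  have hmon : s₁⁻¹ ^ ((p - 1) * (q - 1)) * s₂⁻¹ ^ ((p - 1) * (q - 1)) *
      (s₁ * s₂)⁻¹ ^ ((p - 1) * (q - 1)) = ((s₁ * s₂) ^ 2)⁻¹ ^ ((p - 1) * (q - 1)) := by
    rw [← mul_pow, ← mul_pow]
    congr 1
    field_simp
  rw [hw', ← hmon]
  linear_combination (s₁⁻¹ ^ ((p - 1) * (q - 1)) * s₂⁻¹ ^ ((p - 1) * (q - 1)) *
      (s₁ * s₂)⁻¹ ^ ((p - 1) * (q - 1)) * dx * dy * du / 2) * (-hcast)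

end Field

open Polynomial in
lemma exists_finsupp_sum_eq {K : Type*} [Field K] (W : ℤ[X][X]) (d : ℤ) {x y : K} (hx : x ≠ 0)
    (hy : y ≠ 0) :
    ∃ c : ℤ × ℤ →₀ ℤ,
      (x * y) ^ (-d) * eval₂ (eval₂RingHom (Int.castRingHom K) y) x W =
        c.sum (fun m a => (a : K) * x ^ m.1 * y ^ m.2) ∧
      (∀ m ∈ c.support, m.1 ≤ W.natDegree - d) ∧
      (W ≠ 0 → ∃ m ∈ c.support, m.1 = W.natDegree - d) := by
  refine ⟨∑ i ∈ Finset.range (W.natDegree + 1),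
    ∑ j ∈ Finset.range ((W.coeff i).natDegree + 1),
      Finsupp.single ((i : ℤ) - d, (j : ℤ) - d) ((W.coeff i).coeff j), ?_, ?_, ?_⟩
  · rw [← Finsupp.sum_finsetSum_index (by simp) (by intros; push_cast; ring),
      eval₂_eq_sum_range, Finset.mul_sum]
    refine Finset.sum_congr rfl fun i _ => ?_
    rw [← Finsupp.sum_finsetSum_index (by simp) (by intros; push_cast; ring),
      coe_eval₂RingHom, eval₂_eq_sum_range, Finset.sum_mul, Finset.mul_sum]
    refine Finset.sum_congr rfl fun j _ => ?_
    rw [Finsupp.sum_single_index (by simp), mul_zpow, sub_eq_add_neg, sub_eq_add_neg,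
      zpow_add₀ hx, zpow_add₀ hy, zpow_natCast, zpow_natCast, eq_intCast]
    ring
  · intro m hm
    obtain ⟨i, hi, hm⟩ := Finsupp.mem_support_finsetSum _ hm
    obtain ⟨j, -, hm⟩ := Finsupp.mem_support_finsetSum _ hm
    have := Finset.mem_singleton.1 (Finsupp.support_single_subset hm)
    rw [Finset.mem_range] at hi
    rw [this]
    simp only
    omega
  · intro hW
    refine ⟨(W.natDegree - d, (W.coeff W.natDegree).natDegree - d), ?_, rfl⟩
    rw [Finsupp.mem_support_iff, Finsupp.finsetSum_apply,
      Finset.sum_eq_single_of_mem W.natDegree (Finset.self_mem_range_succ _),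
      Finsupp.finsetSum_apply,
      Finset.sum_eq_single_of_mem (W.coeff W.natDegree).natDegree
        (Finset.self_mem_range_succ _), Finsupp.single_eq_same]
    · simpa using hW
    · intro j _ hj
      refine Finsupp.single_eq_of_ne ?_
      simp only [ne_eq, Prod.mk.injEq]
      omega
    · intro i _ hi
      rw [Finsupp.finsetSum_apply]
      refine Finset.sum_eq_zero fun j _ => Finsupp.single_eq_of_ne ?_
      simp only [ne_eq, Prod.mk.injEq]
      omega

lemma exists_torusTheta_eq_sum {F : Type*} [Field F] [CharZero F] {p q : ℕ} (hp : 2 ≤ p)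
    (hq : 2 ≤ q) (hpq : p.Coprime q) {s₁ s₂ : F} (hs₁ : s₁ ≠ 0) (hs₂ : s₂ ≠ 0)
    (h₁' : ∀ n, 0 < n → (s₁ ^ 2) ^ n ≠ 1) (h₂' : ∀ n, 0 < n → (s₂ ^ 2) ^ n ≠ 1)
    (h₃' : ∀ n, 0 < n → ((s₁ * s₂) ^ 2) ^ n ≠ 1) :
    ∃ c : ℤ × ℤ →₀ ℤ,
      torusTheta p q s₁ s₂ (s₁ * s₂)⁻¹ =
        c.sum (fun m a => (a : F) * s₁ ^ (2 * m.1) * s₂ ^ (2 * m.2)) ∧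
      (∀ m ∈ c.support, m.1 ≤ ((p : ℤ) - 1) * ((q : ℤ) - 1)) ∧
      (∃ m ∈ c.support, m.1 = ((p : ℤ) - 1) * ((q : ℤ) - 1)) := by
  obtain ⟨g, hg⟩ : 2 ∣ (p - 1) * (q - 1) := by
    rw [Nat.prime_two.dvd_mul]
    by_contra! h
    exact Nat.not_coprime_of_dvd_of_dvd one_lt_two (by omega : 2 ∣ p) (by omega : 2 ∣ q) hpq
  have hg0 : 0 < g := by
    have := Nat.mul_pos (by omega : 0 < p - 1) (by omega : 0 < q - 1)
    omega
  obtain ⟨D, W, hDq, hDp, hW, hdeg⟩ :=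
    exists_mul_eq_thetaNumerator (R := ℤ) (by omega : 1 < p) (by omega : 1 < q) hg0 hpq
  let f : Polynomial (Polynomial ℤ) →+* F := Polynomial.eval₂RingHom
    (Polynomial.eval₂RingHom (Int.castRingHom F) (s₂ ^ 2)) (s₁ ^ 2)
  have hfX : f Polynomial.X = s₁ ^ 2 := by simp [f]
  have hfC : f (Polynomial.C Polynomial.X) = s₂ ^ 2 := by simp [f]
  have hfD : ∀ z, f (Polynomial.aeval z D) = Polynomial.aeval (f z) D := fun z =>
    (Polynomial.aeval_algHom_apply (f.toIntAlgHom) z D).symm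
  have hmap : ∀ (z : F) (n : ℕ) (w : Polynomial ℤ),
      Polynomial.aeval z (qInt n w) = qInt n (Polynomial.aeval z w) := fun z =>
    map_qInt ((Polynomial.aeval z : Polynomial ℤ →ₐ[ℤ] F) : Polynomial ℤ →+* F)
  have hq_eq : ∀ z : F, Polynomial.aeval z D * qInt q z = qInt q (z ^ p) := fun z => by
    simpa only [map_mul, hmap, map_pow, Polynomial.aeval_X] using congrArg (Polynomial.aeval z) hDq
  have hp_eq : ∀ z : F, Polynomial.aeval z D * qInt p z = qInt p (z ^ q) := fun z => by
    simpa only [map_mul, hmap, map_pow, Polynomial.aeval_X] using congrArg (Polynomial.aeval z) hDp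
  have hfW := congrArg f hW
  simp only [map_mul, map_thetaNumerator, map_qInt, hfD, hfX, hfC] at hfW
  have hΘ := torusTheta_eq (by omega) (by omega) hg.symm hs₁ hs₂ h₁' h₂' h₃' (hq_eq _) (hp_eq _)
    (hq_eq _) (hp_eq _) (hq_eq _) (hp_eq _) hfW
  obtain ⟨c, hc, hle, hex⟩ := exists_finsupp_sum_eq (-W) (((p - 1) * (q - 1) : ℕ) : ℤ)
    (pow_ne_zero 2 hs₁) (pow_ne_zero 2 hs₂)
  have hcast : (((p - 1) * (q - 1) : ℕ) : ℤ) = ((p : ℤ) - 1) * ((q : ℤ) - 1) := by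
    rw [Nat.cast_mul, Nat.cast_sub (by omega), Nat.cast_sub (by omega), Nat.cast_one]
  have hdeg' : ((-W).natDegree : ℤ) - (((p - 1) * (q - 1) : ℕ) : ℤ) =
      ((p : ℤ) - 1) * ((q : ℤ) - 1) := by
    rw [Polynomial.natDegree_neg, hdeg, ← hcast]
    push_cast
    ring
  rw [hdeg'] at hle hex
  refine ⟨c, ?_, hle, hex ?_⟩
  · rw [hΘ]
    simp only [zpow_mul, zpow_ofNat]
    rw [← hc, zpow_neg, zpow_natCast, ← mul_pow, inv_pow, ← mul_neg]
    congr 1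
    exact (map_neg f W).symm
  · intro h
    rw [neg_eq_zero.1 h, Polynomial.natDegree_zero] at hdeg
    omega

/-- For coprime integers `p, q ≥ 2`, the Laurent polynomial
`Θ_{p,q}(s₁, s₂, (s₁s₂)⁻¹) ∈ ℤ[t₁^{±1}, t₂^{±1}]` (where `t_i = s_i²`) has degree exactly
`(p−1)(q−1)` in `t₁`: it admits a (necessarily unique) representation as an integral
Laurent-polynomial expression in `t₁ = s₁²`, `t₂ = s₂²` in which every occurring exponent
of `t₁` is at most `(p−1)(q−1)` and the exponent `(p−1)(q−1)` occurs with nonzero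
coefficient. -/
theorem torusTheta_degree_t1 (p q : ℕ) (hp : 2 ≤ p) (hq : 2 ≤ q)
    (hpq : Nat.Coprime p q) :
    ∀ (s₁ s₂ : FractionRing (MvPolynomial (Fin 2) ℚ)),
      s₁ = algebraMap (MvPolynomial (Fin 2) ℚ) _ (MvPolynomial.X 0) →
      s₂ = algebraMap (MvPolynomial (Fin 2) ℚ) _ (MvPolynomial.X 1) →
      ∃ c : ℤ × ℤ →₀ ℤ,
        torusTheta p q s₁ s₂ (s₁ * s₂)⁻¹ =
          c.sum (fun m a => (a : FractionRing (MvPolynomial (Fin 2) ℚ)) *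
            s₁ ^ (2 * m.1) * s₂ ^ (2 * m.2)) ∧
        (∀ m ∈ c.support, m.1 ≤ ((p : ℤ) - 1) * ((q : ℤ) - 1)) ∧
        (∃ m ∈ c.support, m.1 = ((p : ℤ) - 1) * ((q : ℤ) - 1)) := by
  rintro s₁ s₂ h₁ h₂
  have hpow : ∀ m : MvPolynomial (Fin 2) ℚ, 1 < MvPolynomial.eval (fun _ => (2 : ℚ)) m →
      ∀ n, 0 < n →
        (algebraMap _ (FractionRing (MvPolynomial (Fin 2) ℚ)) m ^ 2) ^ n ≠ 1 := by
    intro m hm n hn h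
    rw [← pow_mul, ← map_pow, map_eq_one_iff _ (IsFractionRing.injective _ _)] at h
    have := congrArg (MvPolynomial.eval (fun _ => (2 : ℚ))) h
    rw [map_pow, map_one] at this
    exact (one_lt_pow₀ hm (by omega)).ne' this
  have h₁' : ∀ n, 0 < n → (s₁ ^ 2) ^ n ≠ 1 := h₁ ▸ hpow _ (by simp)
  have h₂' : ∀ n, 0 < n → (s₂ ^ 2) ^ n ≠ 1 := h₂ ▸ hpow _ (by simp)
  have h₃' : ∀ n, 0 < n → ((s₁ * s₂) ^ 2) ^ n ≠ 1 := by
    rw [h₁, h₂, ← map_mul]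
    exact hpow _ (by norm_num)
  have hs₁ : s₁ ≠ 0 := by simp [h₁]
  have hs₂ : s₂ ≠ 0 := by simp [h₂]
  exact exists_torusTheta_eq_sum hp hq hpq hs₁ hs₂ h₁' h₂' h₃'
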